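/- Bellman fixed-point property of the lower value: Let 𝒢 = ⟨A, Φ_(Pr,R)⟩ be a 2½-player parity game with arena A = ⟨(S,E),(S₁,S₂,S_N),π⟩ and parity structure (Pr,R). Then the function Val↓(𝒢) : S → [0,1] is a fixed point of the functional 𝓕 : (S → [0,1]) → (S → [0,1]) defined by: 𝓕(f)(s) = R(s) if s is a terminal state; 𝓕(f)(s) = ⨆_{t ∈ E(s)} f(t) if s ∈ S₁; 𝓕(f)(s) = ⨅_{t ∈ E(s)} f(t) if s ∈ S₂; and 𝓕(f)(s) = ∑_{t ∈ E(s)} π(s)(t)·f(t) if s ∈ S_N. -/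

import Mathlib

noncomputable section

open scoped unitInterval Classical

/-- The three agents of a 2½-player game. -/
inductive Player : Type
  | one : Player
  | two : Player
  | nature : Player
deriving DecidableEq

/-- A 2½-player arena: a directed graph `(S, E)`, an assignment of states to the
players (Player 1, Player 2, Nature), and probabilistic transition data at Nature
states. -/
structure Arena (S : Type) where
  E : S → Set S
  owner : S → Player
  prob : S → S → ℝ

namespace Arena

variable {S : Type}

/-- Well-formedness: at every Nature state `s`, `prob s` is a probability
distribution whose support is exactly the set `E s` of successors of `s`. -/
def Wellformed (A : Arena S) : Prop :=
  ∀ s, A.owner s = Player.nature →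
    (∀ t, 0 ≤ A.prob s t) ∧ HasSum (A.prob s) 1 ∧ A.E s = Function.support (A.prob s)

/-- `s` is a terminal state if it has no successors. -/
def Terminal (A : Arena S) (s : S) : Prop := A.E s = ∅

end Arena

/-- An (unbounded memory deterministic) strategy for player `pl` in arena `A`:
given the history `hist` and the current state `s` (a non-terminal state owned by
`pl`), it picks a successor of `s`. -/
structure Strategy {S : Type} (A : Arena S) (pl : Player) where
  next : List S → S → S
  valid : ∀ (hist : List S) (s : S), A.owner s = pl → A.E s ≠ ∅ → next hist s ∈ A.E s

variable {S : Type}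

/-- The Markov chain determined by a strategy profile `(σ1, σ2)` and initial state
`s0`: the tree of finite paths from `s0` in which nodes ending in a Player 1
(resp. Player 2) state are extended uniquely according to `σ1` (resp. `σ2`), nodes
ending in a Nature state branch fully over the successors, and (for the purpose of
encoding finite completed paths as infinite sequences) nodes ending in a terminal
state are extended by repeating the terminal state. -/
inductive MC (A : Arena S) (σ1 : Strategy A Player.one) (σ2 : Strategy A Player.two)
    (s0 : S) : List S → Prop
  | root : MC A σ1 σ2 s0 [s0]
  | one (l : List S) (s : S) : MC A σ1 σ2 s0 (l ++ [s]) → A.owner s = Player.one →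
      A.E s ≠ ∅ → MC A σ1 σ2 s0 (l ++ [s, σ1.next l s])
  | two (l : List S) (s : S) : MC A σ1 σ2 s0 (l ++ [s]) → A.owner s = Player.two →
      A.E s ≠ ∅ → MC A σ1 σ2 s0 (l ++ [s, σ2.next l s])
  | nature (l : List S) (s t : S) : MC A σ1 σ2 s0 (l ++ [s]) →
      A.owner s = Player.nature → t ∈ A.E s → MC A σ1 σ2 s0 (l ++ [s, t])
  | term (l : List S) (s : S) : MC A σ1 σ2 s0 (l ++ [s]) → A.E s = ∅ →
      MC A σ1 σ2 s0 (l ++ [s, s])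

/-- The space of completed paths, encoded as infinite sequences of states
(a finite completed path, i.e. one ending in a terminal state, is encoded by
repeating its terminal state forever). -/
def PathSpace (S : Type) : Type := ℕ → S

instance : MeasurableSpace (PathSpace S) :=
  @MeasurableSpace.pi ℕ (fun _ => S) (fun _ => ⊤)

/-- The basic cylinder set of completed paths extending a finite path. -/
def cyl (l : List S) : Set (PathSpace S) :=
  {u | ∀ i : Fin l.length, u i = l.get i}

/-- the probability of a single step -/
def stepProb (A : Arena S) (s t : S) : ℝ :=
  if A.owner s = Player.nature then A.prob s t else 1

/-- The product of the probabilities of the Nature steps along a finite path. -/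
def pathProb (A : Arena S) : List S → ℝ
  | [] => 1
  | [_] => 1
  | s :: t :: l => stepProb A s t * pathProb A (t :: l)

/-- The weight assigned to a basic cylinder: the product of the probabilities of its
Nature steps if the underlying finite path belongs to the Markov chain, `0` otherwise. -/
def cylWeight (A : Arena S) (σ1 : Strategy A Player.one) (σ2 : Strategy A Player.two)
    (s0 : S) (l : List S) : ℝ :=
  if MC A σ1 σ2 s0 l then pathProb A l else 0

/-- The Borel probability measure on completed paths induced by the Markov chain
`M^{s0}_{σ1,σ2}`: the unique probability measure assigning to every basic cylinder
its weight. -/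
def pathMeasure (A : Arena S) (σ1 : Strategy A Player.one) (σ2 : Strategy A Player.two)
    (s0 : S) : MeasureTheory.Measure (PathSpace S) :=
  if h : ∃ μ : MeasureTheory.Measure (PathSpace S), MeasureTheory.IsProbabilityMeasure μ ∧
      ∀ l : List S, l ≠ [] → μ (cyl l) = ENNReal.ofReal (cylWeight A σ1 σ2 s0 l)
  then h.choose else 0

/-- The payoff function induced by a parity structure `(pri, R)`: a completed path
reaching a terminal state gets the reward `R` of (the first occurrence of) that
terminal state; an infinite path gets `1` if the greatest priority occurring
infinitely often along it is even, and `0` otherwise. -/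
def payoff (A : Arena S) (pri : S → ℕ) (R : S → ℝ) (u : PathSpace S) : ℝ :=
  if h : ∃ i, A.E (u i) = ∅ then R (u (Nat.find h))
  else if Even (sSup {n | {i | pri (u i) = n}.Infinite}) then 1 else 0

/-- The expected reward of Player 1 for the Markov chain `M^{s0}_{σ1,σ2}`:
the integral of the payoff against the induced probability measure on paths. -/
def expReward (A : Arena S) (pri : S → ℕ) (R : S → ℝ) (σ1 : Strategy A Player.one)
    (σ2 : Strategy A Player.two) (s0 : S) : ℝ :=
  ∫ u, payoff A pri R u ∂(pathMeasure A σ1 σ2 s0)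

/-- The lower value `Val↓` of the 2½-player parity game `⟨A, Φ_(pri,R)⟩`. -/
def lowerValue (A : Arena S) (pri : S → ℕ) (R : S → ℝ) (s : S) : ℝ :=
  ⨆ σ1 : Strategy A Player.one, ⨅ σ2 : Strategy A Player.two, expReward A pri R σ1 σ2 s

/-- The upper value `Val↑` of the 2½-player parity game `⟨A, Φ_(pri,R)⟩`. -/
def upperValue (A : Arena S) (pri : S → ℕ) (R : S → ℝ) (s : S) : ℝ :=
  ⨅ σ2 : Strategy A Player.two, ⨆ σ1 : Strategy A Player.one, expReward A pri R σ1 σ2 s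

/-- The Bellman functional `𝓕` on `S → ℝ` associated to the game `⟨A, Φ_(pri,R)⟩`. -/
def bellman (A : Arena S) (R : S → ℝ) (f : S → ℝ) : S → ℝ := fun s =>
  if A.E s = ∅ then R s
  else match A.owner s with
    | Player.one => sSup (f '' A.E s)
    | Player.two => sInf (f '' A.E s)
    | Player.nature => ∑' t : A.E s, A.prob s t * f t

/-!
Only the tail property of the parity payoff matters: passing from a nonterminal state to its
successor does not change the payoff. The measure of a play is the law of a history-dependent
random sequence, so conditioning on the second state `t` expresses the expected reward from `s` as
the average over `t` of the expected rewards from `t` for the residual strategies. A strategy of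
either player can be assembled from a first move and an arbitrary continuation for each `t`, in
particular an `ε`-optimal one. Hence `Val↓(s)` is the supremum over `σ₁` and infimum over `σ₂` of
the mean of `Val↓` after one step from `s`, and only the owner of `s` influences this step.
-/

open MeasureTheory

/-! ## Measures on path space -/

theorem measurableSet_setOf_mem_of_countable_range {Ω β : Type*} [MeasurableSpace Ω] {f : Ω → β}
    (hrange : (Set.range f).Countable) (hf : ∀ b, MeasurableSet {ω | f ω = b})
    {P : β → Set Ω} (hP : ∀ b, MeasurableSet (P b)) : MeasurableSet {ω | ω ∈ P (f ω)} := by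
  have hunion : {ω | ω ∈ P (f ω)} = ⋃ b ∈ Set.range f, {ω | f ω = b} ∩ P b := by
    ext ω
    simp only [Set.mem_ofPred_eq, Set.mem_iUnion, Set.mem_inter_iff, exists_prop]
    exact ⟨fun h => ⟨f ω, ⟨ω, rfl⟩, rfl, h⟩, fun ⟨_, _, hb, h⟩ => hb ▸ h⟩
  rw [hunion]
  exact MeasurableSet.biUnion hrange fun b _ => (hf b).inter (hP b)

theorem sum_smul_dirac_of_tsum_singleton {α : Type*} [MeasurableSpace α]
    [MeasurableSingletonClass α] (μ : Measure α) [IsFiniteMeasure μ]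
    (h : ∑' x, μ {x} = μ Set.univ) : Measure.sum (fun x => μ {x} • Measure.dirac x) = μ := by
  have happly {s : Set α} (hs : MeasurableSet s) :
      Measure.sum (fun x => μ {x} • Measure.dirac x) s = ∑' x : s, μ {x.1} := by
    rw [Measure.sum_apply _ hs, tsum_subtype s fun x => μ {x}]
    refine tsum_congr fun x => ?_
    by_cases hx : x ∈ s <;> simp [hx]
  have hle : Measure.sum (fun x => μ {x} • Measure.dirac x) ≤ μ := by
    refine Measure.le_iff.2 fun s hs => ?_
    calc Measure.sum (fun x => μ {x} • Measure.dirac x) s = ∑' x : s, μ {x.1} := happly hs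
      _ ≤ μ (⋃ x : s, {x.1}) := tsum_meas_le_meas_iUnion_of_disjoint μ
          (fun x => measurableSet_singleton x.1) fun x y hxy =>
            Set.disjoint_singleton.2 (Subtype.coe_injective.ne hxy)
      _ = μ s := by rw [Set.iUnion_of_singleton_coe]
  have : IsFiniteMeasure (Measure.sum fun x => μ {x} • Measure.dirac x) :=
    isFiniteMeasure_of_le μ hle
  refine Measure.eq_of_le_of_measure_univ_eq hle ?_
  rw [happly MeasurableSet.univ, tsum_univ fun x => μ {x}, h]

theorem measure_ext_of_map_initial {α : Type*} [MeasurableSpace α] {μ ν : Measure (ℕ → α)}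
    [IsFiniteMeasure μ]
    (h : ∀ n, μ.map (fun u (i : Fin n) => u i) = ν.map fun u (i : Fin n) => u i) : μ = ν := by
  refine IsProjectiveLimit.unique (P := fun J : Finset ℕ => μ.map J.restrict) (fun _ => rfl)
    fun J => ?_
  let n := J.sup id + 1
  have hJ (j : J) : (j : ℕ) < n := Nat.lt_succ_of_le (Finset.le_sup (f := id) j.2)
  let forget (x : Fin n → α) (j : J) : α := x ⟨j, hJ j⟩
  have hforget : Measurable forget := by fun_prop
  have hinitial : Measurable fun (u : ℕ → α) (i : Fin n) => u i := by fun_prop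
  have hmap (ρ : Measure (ℕ → α)) :
      ρ.map J.restrict = (ρ.map fun u (i : Fin n) => u i).map forget :=
    (Measure.map_map hforget hinitial).symm
  change ν.map J.restrict = μ.map J.restrict
  rw [hmap ν, hmap μ, h n]

namespace PathSpace

theorem measurableSet_setOf_apply_mem (n : ℕ) (B : Set S) :
    MeasurableSet {u : PathSpace S | u n ∈ B} := by
  let _ : MeasurableSpace S := ⊤
  exact measurable_pi_apply (X := fun _ : ℕ => S) n (MeasurableSpace.measurableSet_top (s := B))

theorem measurable_of_measurableSet_setOf_apply_mem {α : Type*} [MeasurableSpace α]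
    {f : α → PathSpace S} (h : ∀ n (B : Set S), MeasurableSet {a | f a n ∈ B}) :
    Measurable f := by
  let _ : MeasurableSpace S := ⊤
  exact (measurable_pi_iff (X := fun _ : ℕ => S)).2 fun n B _ => h n B

theorem mem_cyl {l : List S} {u : PathSpace S} :
    u ∈ cyl l ↔ ∀ i (hi : i < l.length), u i = l[i] :=
  Fin.forall_iff

theorem cyl_nil : cyl ([] : List S) = Set.univ :=
  Set.eq_univ_of_forall fun _ i => i.elim0

theorem measurableSet_cyl (l : List S) : MeasurableSet (cyl l) := by
  have hinter : cyl l = ⋂ i : Fin l.length, {u : PathSpace S | u i ∈ ({l.get i} : Set S)} := by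
    ext u
    simp [cyl]
  rw [hinter]
  exact MeasurableSet.iInter fun i => measurableSet_setOf_apply_mem i _

/-- The path that starts in `s` and then follows `u`. -/
def cons (s : S) (u : PathSpace S) : PathSpace S
  | 0 => s
  | n + 1 => u n

theorem measurable_cons (s : S) : Measurable (cons s) := by
  refine measurable_of_measurableSet_setOf_apply_mem fun n B => ?_
  cases n with
  | zero => exact MeasurableSet.const (s ∈ B)
  | succ n => exact measurableSet_setOf_apply_mem n B

theorem cons_preimage_cyl_cons (s x : S) (l : List S) :
    cons s ⁻¹' cyl (x :: l) = if s = x then cyl l else ∅ := by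
  have hmem (u : PathSpace S) : cons s u ∈ cyl (x :: l) ↔ s = x ∧ u ∈ cyl l :=
    Fin.forall_fin_succ
  ext u
  rw [Set.mem_preimage, hmem]
  split_ifs with h <;> simp [h]

-- The cylinders do not generate the σ-algebra when `S` is uncountable. But they are the preimages
-- of the singletons of `Fin n → S`, so the law of the first `n` states is discrete once the
-- cylinders of length `n` carry the whole mass.
theorem measure_ext_of_cyl {μ ν : Measure (PathSpace S)} [IsProbabilityMeasure μ]
    [IsProbabilityMeasure ν] (hμν : ∀ l, μ (cyl l) = ν (cyl l))
    (hμ : ∀ n, ∑' x : Fin n → S, μ (cyl (List.ofFn x)) = 1) : μ = ν := by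
  let _ : MeasurableSpace S := ⊤
  let initial (n : ℕ) (u : PathSpace S) : Fin n → S := fun i => u i
  have hinitial (n : ℕ) : Measurable (initial n) :=
    measurable_pi_lambda _ fun i => measurable_pi_apply (X := fun _ : ℕ => S) i
  have hsingleton (ρ : Measure (PathSpace S)) {n : ℕ} (x : Fin n → S) :
      ρ.map (initial n) {x} = ρ (cyl (List.ofFn x)) := by
    rw [Measure.map_apply (hinitial n) (measurableSet_singleton x)]
    congr 1
    ext u
    simp [mem_cyl, initial, funext_iff, Fin.forall_iff]
  have hprob (ρ : Measure (PathSpace S)) [IsProbabilityMeasure ρ] (n : ℕ) :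
      IsProbabilityMeasure (ρ.map (initial n)) :=
    Measure.isProbabilityMeasure_map (hinitial n).aemeasurable
  have : IsFiniteMeasure (α := ℕ → S) μ := inferInstanceAs (IsFiniteMeasure (α := PathSpace S) μ)
  refine measure_ext_of_map_initial (α := S) fun n => ?_
  change μ.map (initial n) = ν.map (initial n)
  rw [← sum_smul_dirac_of_tsum_singleton (μ.map (initial n)) (by simp [hsingleton, hμ]),
    ← sum_smul_dirac_of_tsum_singleton (ν.map (initial n)) (by simp [hsingleton, ← hμν, hμ])]
  simp only [hsingleton, hμν]

end PathSpace

/-! ## Laws of history-dependent processes -/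

/-- A history-dependent transition rule: the law of the next state given the states visited so
far. -/
abbrev HistoryKernel (S : Type) : Type := List S → PMF S

/-- The distribution `q` regarded as a distribution on its (countable) support. -/
def restrictSupport (q : PMF S) : PMF q.support :=
  ⟨fun t => q t, (hasSum_subtype_support (f := (q : S → ENNReal))).2 q.2⟩

instance (q : PMF S) : MeasurableSpace q.support := ⊤

theorem toMeasure_restrictSupport_apply (q : PMF S) (s : S) :
    (restrictSupport q).toMeasure {t | (t : S) = s} = q s := by
  by_cases hs : s ∈ q.support
  · have hsingleton : {t : q.support | (t : S) = s} = {⟨s, hs⟩} := by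
      ext t
      exact (Subtype.ext_iff (a1 := t) (a2 := ⟨s, hs⟩)).symm
    rw [hsingleton, PMF.toMeasure_apply_singleton _ _ MeasurableSpace.measurableSet_top]
    rfl
  · have hempty : {t : q.support | (t : S) = s} = ∅ :=
      Set.eq_empty_of_forall_notMem fun t ht => hs (ht ▸ t.2)
    rw [hempty, measure_empty, (q.apply_eq_zero_iff s).2 hs]

namespace HistoryKernel

variable (p : HistoryKernel S)

/-- The transition rule that remains once the first state is known to be `t`. -/
def after (t : S) : HistoryKernel S := fun h => p (t :: h)

/-- The probability that the process starts with the given finite path. -/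
def weight : HistoryKernel S → List S → ENNReal
  | _, [] => 1
  | p, t :: l => p [] t * weight (p.after t) l

theorem weight_append_singleton (l : List S) (t : S) :
    p.weight (l ++ [t]) = p.weight l * p l t := by
  induction l generalizing p with
  | nil => simp [weight]
  | cons a l ih => simp [weight, ih, mul_assoc, after]

theorem weight_eq_prod (l : List S) :
    p.weight l = ∏ i : Fin l.length, p (l.take i) l[i] := by
  induction l generalizing p with
  | nil => simp [weight]
  | cons a l ih => simp [weight, ih, Fin.prod_univ_succ, after]

theorem tsum_weight_ofFn (n : ℕ) : ∑' x : Fin n → S, p.weight (List.ofFn x) = 1 := by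
  induction n generalizing p with
  | zero => simp [weight]
  | succ n ih =>
    calc ∑' x : Fin (n + 1) → S, p.weight (List.ofFn x)
        = ∑' y : S × (Fin n → S), p [] y.1 * (p.after y.1).weight (List.ofFn y.2) := by
          rw [← (Fin.consEquiv fun _ => S).tsum_eq]
          simp [weight, Fin.consEquiv]
      _ = ∑' t, p [] t := by
          rw [ENNReal.tsum_prod']
          simp only [ENNReal.tsum_mul_left, ih, mul_one]
      _ = 1 := (p []).tsum_coe

/-- A choice of next state for every history. Restricting the choices to the countable supports
keeps the sampled path measurable when `S` is uncountable. -/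
abbrev Draws : Type := (h : List S) → (p h).support

variable {p} in
/-- The first `n` states obtained by following the draws `ω`. -/
def history (ω : p.Draws) : ℕ → List S
  | 0 => []
  | n + 1 => history ω n ++ [(ω (history ω n)).1]

variable {p} in
/-- The infinite path obtained by following the draws `ω`. -/
def path (ω : p.Draws) : PathSpace S := fun n => ω (history ω n)

theorem countable_range_history (n : ℕ) : (Set.range fun ω : p.Draws => history ω n).Countable := by
  induction n with
  | zero => exact (Set.countable_singleton []).mono (Set.range_subset_iff.2 fun _ => rfl)
  | succ n ih =>
    refine (ih.biUnion fun h _ => (p h).support_countable.image fun t => h ++ [t]).mono ?_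
    rintro _ ⟨ω, rfl⟩
    exact Set.mem_biUnion ⟨ω, rfl⟩ ⟨_, (ω (history ω n)).2, rfl⟩

theorem measurableSet_draw_mem (h : List S) (B : Set S) :
    MeasurableSet {ω : p.Draws | (ω h).1 ∈ B} :=
  measurable_pi_apply (X := fun h => (p h).support) h
    (MeasurableSpace.measurableSet_top (s := Subtype.val ⁻¹' B))

theorem measurableSet_history_eq (n : ℕ) (l : List S) :
    MeasurableSet {ω : p.Draws | history ω n = l} := by
  induction n generalizing l with
  | zero => exact MeasurableSet.const ([] = l)
  | succ n ih =>
    exact measurableSet_setOf_mem_of_countable_range (p.countable_range_history n) ih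
      (P := fun h => {ω | h ++ [(ω h).1] = l}) fun h =>
        p.measurableSet_draw_mem h {t | h ++ [t] = l}

theorem measurable_path : Measurable (path (p := p)) :=
  PathSpace.measurable_of_measurableSet_setOf_apply_mem fun n B =>
    measurableSet_setOf_mem_of_countable_range (p.countable_range_history n)
      (p.measurableSet_history_eq n) (P := fun h => {ω | (ω h).1 ∈ B}) fun h =>
        p.measurableSet_draw_mem h B

variable {p} in
theorem history_eq_take {ω : p.Draws} {l : List S} {n : ℕ} (hn : n ≤ l.length)
    (h : ∀ i (hi : i < l.length), i < n → (ω (l.take i)).1 = l[i]) : history ω n = l.take n := by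
  induction n with
  | zero => simp [history]
  | succ n ih =>
    rw [history, ih (by lia) fun i hi hin => h i hi (by lia), h n (by lia) (by lia),
      List.take_append_getElem]

variable {p} in
theorem path_mem_cyl {ω : p.Draws} {l : List S} :
    path ω ∈ cyl l ↔ ∀ i (hi : i < l.length), (ω (l.take i)).1 = l[i] := by
  rw [PathSpace.mem_cyl]
  constructor
  · intro h i
    induction i using Nat.strong_induction_on with
    | _ i ih =>
      intro hi
      rw [← h i hi, path, history_eq_take hi.le fun j hj hji => ih j hji hj]
  · intro h i hi
    rw [← h i hi, path, history_eq_take hi.le fun j hj _ => h j hj]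

/-- The law of the infinite path generated by `p`, obtained by drawing a next state for every
history independently and following the draws. -/
def law : Measure (PathSpace S) :=
  (Measure.infinitePi fun h => (restrictSupport (p h)).toMeasure).map path

instance : IsProbabilityMeasure p.law :=
  Measure.isProbabilityMeasure_map p.measurable_path.aemeasurable

theorem law_cyl (l : List S) : p.law (cyl l) = p.weight l := by
  have htake : Function.Injective fun i : Fin l.length => l.take i := fun i j hij => by
    simpa [Fin.ext_iff, i.2.le, j.2.le] using congrArg List.length hij
  have hpreimage : path ⁻¹' cyl l =
      Set.pi (Finset.univ.image fun i : Fin l.length => l.take i : Finset (List S))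
        fun h => {t : (p h).support | some t.1 = l[h.length]?} := by
    ext ω
    simp +contextual [path_mem_cyl, Set.mem_pi, Fin.forall_iff, le_of_lt]
  rw [law, Measure.map_apply p.measurable_path (PathSpace.measurableSet_cyl l), hpreimage,
    Measure.infinitePi_pi _ fun _ _ => MeasurableSpace.measurableSet_top,
    Finset.prod_image htake.injOn, weight_eq_prod]
  refine Finset.prod_congr rfl fun i _ => ?_
  rw [← toMeasure_restrictSupport_apply]
  simp [i.2.le]

theorem eq_law_of_cyl {μ : Measure (PathSpace S)} [IsProbabilityMeasure μ]
    (h : ∀ l, μ (cyl l) = p.weight l) : μ = p.law :=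
  PathSpace.measure_ext_of_cyl (fun l => by rw [h, law_cyl]) fun n => by
    simp only [h, tsum_weight_ofFn]

theorem law_eq_sum_map_cons :
    p.law = Measure.sum fun t => p [] t • (p.after t).law.map (PathSpace.cons t) := by
  have hprob (t : S) : IsProbabilityMeasure ((p.after t).law.map (PathSpace.cons t)) :=
    Measure.isProbabilityMeasure_map (PathSpace.measurable_cons t).aemeasurable
  have : IsProbabilityMeasure
      (Measure.sum fun t => p [] t • (p.after t).law.map (PathSpace.cons t)) :=
    ⟨by simp [Measure.sum_apply _ MeasurableSet.univ, (p []).tsum_coe]⟩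
  refine (p.eq_law_of_cyl fun l => ?_).symm
  cases l with
  | nil => rw [PathSpace.cyl_nil, measure_univ, weight]
  | cons x l =>
    have hterm (t : S) : (p [] t • (p.after t).law.map (PathSpace.cons t)) (cyl (x :: l)) =
        if t = x then p.weight (x :: l) else 0 := by
      rw [Measure.smul_apply, Measure.map_apply (PathSpace.measurable_cons t)
        (PathSpace.measurableSet_cyl _), PathSpace.cons_preimage_cyl_cons]
      split_ifs with h
      · rw [h, law_cyl, weight, smul_eq_mul]
      · rw [measure_empty, smul_zero]
    simp only [Measure.sum_apply _ (PathSpace.measurableSet_cyl _), hterm, tsum_ite_eq]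

theorem integral_law {Φ : PathSpace S → ℝ} (hmeasurable : Measurable Φ)
    (hintegrable : Integrable Φ p.law) :
    ∫ u, Φ u ∂p.law =
      ∑' t, (p [] t).toReal * ∫ u, Φ (PathSpace.cons t u) ∂(p.after t).law := by
  rw [law_eq_sum_map_cons] at hintegrable ⊢
  rw [integral_sum_measure hintegrable]
  refine tsum_congr fun t => ?_
  rw [integral_smul_measure, smul_eq_mul,
    integral_map (PathSpace.measurable_cons t).aemeasurable hmeasurable.aestronglyMeasurable]

end HistoryKernel

/-! ## The law of a play -/

namespace Arena.Wellformed

variable {A : Arena S} (hA : A.Wellformed)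
  (σ₁ : Strategy A Player.one) (σ₂ : Strategy A Player.two)

include hA in
theorem E_ne_empty_of_owner_nature {s : S} (hs : A.owner s = Player.nature) : A.E s ≠ ∅ := by
  obtain ⟨-, hsum, hE⟩ := hA s hs
  intro hempty
  rw [Function.support_eq_empty_iff.1 (hE.symm.trans hempty)] at hsum
  exact zero_ne_one (hasSum_zero.unique hsum)

include hA in
theorem stepProb_nonneg (s t : S) : 0 ≤ stepProb A s t := by
  unfold stepProb
  split_ifs with hs
  · exact (hA s hs).1 t
  · exact zero_le_one

/-- The distribution `π(s)` of a Nature state `s`. -/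
def natureLaw (s : S) (hs : A.owner s = Player.nature) : PMF S :=
  ⟨fun t => ENNReal.ofReal (A.prob s t), by
    obtain ⟨hnonneg, hsum, -⟩ := hA s hs
    have hofReal := ENNReal.ofReal_tsum_of_nonneg hnonneg hsum.summable
    rw [hsum.tsum_eq, ENNReal.ofReal_one] at hofReal
    exact hofReal ▸ ENNReal.summable.hasSum⟩

theorem natureLaw_apply {s : S} (hs : A.owner s = Player.nature) (t : S) :
    hA.natureLaw s hs t = ENNReal.ofReal (A.prob s t) :=
  rfl

theorem natureLaw_ne_zero_iff {s : S} (hs : A.owner s = Player.nature) (t : S) :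
    hA.natureLaw s hs t ≠ 0 ↔ t ∈ A.E s := by
  obtain ⟨hnonneg, -, hE⟩ := hA s hs
  rw [natureLaw_apply, hE, Function.mem_support, ENNReal.ofReal_ne_zero_iff,
    (hnonneg t).lt_iff_ne, ne_comm]

/-- The law of the state that follows `s` after the history `l`, with terminal states repeated. -/
def nextLaw (l : List S) (s : S) : PMF S :=
  if A.E s = ∅ then PMF.pure s
  else match hs : A.owner s with
    | Player.one => PMF.pure (σ₁.next l s)
    | Player.two => PMF.pure (σ₂.next l s)
    | Player.nature => hA.natureLaw s hs

variable {σ₁ σ₂} {l : List S} {s : S}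

theorem nextLaw_of_terminal (hs : A.E s = ∅) : hA.nextLaw σ₁ σ₂ l s = PMF.pure s :=
  if_pos hs

theorem nextLaw_of_owner_one (hs : A.E s ≠ ∅) (ho : A.owner s = Player.one) :
    hA.nextLaw σ₁ σ₂ l s = PMF.pure (σ₁.next l s) := by
  rw [nextLaw, if_neg hs]
  split <;> simp_all

theorem nextLaw_of_owner_two (hs : A.E s ≠ ∅) (ho : A.owner s = Player.two) :
    hA.nextLaw σ₁ σ₂ l s = PMF.pure (σ₂.next l s) := by
  rw [nextLaw, if_neg hs]
  split <;> simp_all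

theorem nextLaw_of_owner_nature (ho : A.owner s = Player.nature) :
    hA.nextLaw σ₁ σ₂ l s = hA.natureLaw s ho := by
  rw [nextLaw, if_neg (hA.E_ne_empty_of_owner_nature ho)]
  split <;> simp_all

theorem nextLaw_congr {σ₁' : Strategy A Player.one} {σ₂' : Strategy A Player.two} {l' : List S}
    (h₁ : σ₁.next l s = σ₁'.next l' s) (h₂ : σ₂.next l s = σ₂'.next l' s) :
    hA.nextLaw σ₁ σ₂ l s = hA.nextLaw σ₁' σ₂' l' s := by
  unfold nextLaw
  rw [h₁, h₂]

theorem nextLaw_apply_of_ne_zero {t : S} (h : hA.nextLaw σ₁ σ₂ l s t ≠ 0) :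
    hA.nextLaw σ₁ σ₂ l s t = ENNReal.ofReal (stepProb A s t) := by
  by_cases hnature : A.owner s = Player.nature
  · rw [hA.nextLaw_of_owner_nature hnature, stepProb, if_pos hnature, natureLaw_apply]
  · have hpure : ∃ x, hA.nextLaw σ₁ σ₂ l s = PMF.pure x := by
      by_cases hs : A.E s = ∅
      · exact ⟨_, hA.nextLaw_of_terminal hs⟩
      · cases ho : A.owner s with
        | one => exact ⟨_, hA.nextLaw_of_owner_one hs ho⟩
        | two => exact ⟨_, hA.nextLaw_of_owner_two hs ho⟩
        | nature => exact absurd ho hnature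
    obtain ⟨x, hx⟩ := hpure
    rw [hx, PMF.pure_apply] at h ⊢
    rw [if_pos (by_contra fun hne => h (if_neg hne)), stepProb, if_neg hnature, ENNReal.ofReal_one]

/-- The transition rule of the play started in `s₀`. Here the list contains all states visited so
far, the current one being the last, whereas strategies receive the current state separately. -/
def kernel (σ₁ : Strategy A Player.one) (σ₂ : Strategy A Player.two) (s₀ : S) : HistoryKernel S
  | [] => PMF.pure s₀
  | t :: h => hA.nextLaw σ₁ σ₂ (t :: h).dropLast ((t :: h).getLast (List.cons_ne_nil t h))

theorem kernel_append_singleton (s₀ : S) :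
    hA.kernel σ₁ σ₂ s₀ (l ++ [s]) = hA.nextLaw σ₁ σ₂ l s := by
  have hcons : ∀ h (hne : h ≠ []),
      hA.kernel σ₁ σ₂ s₀ h = hA.nextLaw σ₁ σ₂ h.dropLast (h.getLast hne)
    | _ :: _, _ => rfl
  rw [hcons (l ++ [s]) (by simp), List.getLast_concat]
  simp

end Arena.Wellformed

theorem append_pair_inj {α : Type*} {l l' : List α} {a b a' b' : α} :
    l ++ [a, b] = l' ++ [a', b'] ↔ l = l' ∧ a = a' ∧ b = b' := by
  simp [List.append_eq_append_iff_of_size_eq_right]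

section MarkovChain

variable {A : Arena S} {σ₁ : Strategy A Player.one} {σ₂ : Strategy A Player.two} {s₀ : S}

theorem MC_singleton {x : S} : MC A σ₁ σ₂ s₀ [x] ↔ x = s₀ := by
  refine ⟨fun h => ?_, fun h => h ▸ MC.root⟩
  generalize hl : [x] = l at h
  cases h <;> simp_all [List.singleton_eq_append_iff]

theorem MC_append_pair (hA : A.Wellformed) {l : List S} {s t : S} :
    MC A σ₁ σ₂ s₀ (l ++ [s, t]) ↔ MC A σ₁ σ₂ s₀ (l ++ [s]) ∧ hA.nextLaw σ₁ σ₂ l s t ≠ 0 := by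
  constructor
  · intro h
    generalize hl : l ++ [s, t] = l' at h
    cases h with
    | root => simp [List.append_eq_cons_iff] at hl
    | one l' s' hMC ho hs =>
      obtain ⟨rfl, rfl, rfl⟩ := append_pair_inj.1 hl
      exact ⟨hMC, by simp [hA.nextLaw_of_owner_one hs ho]⟩
    | two l' s' hMC ho hs =>
      obtain ⟨rfl, rfl, rfl⟩ := append_pair_inj.1 hl
      exact ⟨hMC, by simp [hA.nextLaw_of_owner_two hs ho]⟩
    | nature l' s' t' hMC ho ht =>
      obtain ⟨rfl, rfl, rfl⟩ := append_pair_inj.1 hl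
      exact ⟨hMC, by rwa [hA.nextLaw_of_owner_nature ho, hA.natureLaw_ne_zero_iff]⟩
    | term l' s' hMC hs =>
      obtain ⟨rfl, rfl, rfl⟩ := append_pair_inj.1 hl
      exact ⟨hMC, by simp [hA.nextLaw_of_terminal hs]⟩
  · rintro ⟨hMC, ht⟩
    have eq_of_pure {x : S} (h : PMF.pure x t ≠ 0) : t = x := (PMF.mem_support_pure_iff x t).1 h
    by_cases hs : A.E s = ∅
    · rw [hA.nextLaw_of_terminal hs] at ht
      exact eq_of_pure ht ▸ MC.term l s hMC hs
    cases ho : A.owner s with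
    | one =>
      rw [hA.nextLaw_of_owner_one hs ho] at ht
      exact eq_of_pure ht ▸ MC.one l s hMC ho hs
    | two =>
      rw [hA.nextLaw_of_owner_two hs ho] at ht
      exact eq_of_pure ht ▸ MC.two l s hMC ho hs
    | nature =>
      rw [hA.nextLaw_of_owner_nature ho, hA.natureLaw_ne_zero_iff] at ht
      exact MC.nature l s t hMC ho ht

theorem pathProb_append_pair (l : List S) (s t : S) :
    pathProb A (l ++ [s, t]) = pathProb A (l ++ [s]) * stepProb A s t := by
  induction l with
  | nil => simp [pathProb]
  | cons a l ih =>
    cases l with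
    | nil => simp [pathProb]
    | cons b l =>
      simp only [List.cons_append, pathProb] at ih ⊢
      rw [ih, mul_assoc]

theorem ofReal_cylWeight_eq_weight (hA : A.Wellformed) {l : List S} (hl : l ≠ []) :
    ENNReal.ofReal (cylWeight A σ₁ σ₂ s₀ l) = (hA.kernel σ₁ σ₂ s₀).weight l := by
  suffices h : ∀ l s, ENNReal.ofReal (cylWeight A σ₁ σ₂ s₀ (l ++ [s])) =
      (hA.kernel σ₁ σ₂ s₀).weight (l ++ [s]) from
    List.dropLast_append_getLast hl ▸ h l.dropLast (l.getLast hl)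
  intro l
  induction l using List.reverseRecOn with
  | nil =>
    intro s
    by_cases hs : s = s₀ <;>
      simp [cylWeight, MC_singleton, HistoryKernel.weight, Arena.Wellformed.kernel, pathProb, hs]
  | append_singleton l s ih =>
    intro t
    rw [HistoryKernel.weight_append_singleton, ← ih, hA.kernel_append_singleton,
      List.append_assoc, List.singleton_append]
    simp only [cylWeight, MC_append_pair hA]
    by_cases hMC : MC A σ₁ σ₂ s₀ (l ++ [s])
    · by_cases ht : hA.nextLaw σ₁ σ₂ l s t = 0
      · simp [ht]
      · rw [if_pos ⟨hMC, ht⟩, if_pos hMC, hA.nextLaw_apply_of_ne_zero ht, pathProb_append_pair,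
          ENNReal.ofReal_mul' (hA.stepProb_nonneg s t)]
    · simp [hMC]

theorem pathMeasure_eq_law (hA : A.Wellformed) :
    pathMeasure A σ₁ σ₂ s₀ = (hA.kernel σ₁ σ₂ s₀).law := by
  have hex : ∃ μ : Measure (PathSpace S), IsProbabilityMeasure μ ∧
      ∀ l : List S, l ≠ [] → μ (cyl l) = ENNReal.ofReal (cylWeight A σ₁ σ₂ s₀ l) :=
    ⟨(hA.kernel σ₁ σ₂ s₀).law, inferInstance, fun l hl => by
      rw [HistoryKernel.law_cyl, ofReal_cylWeight_eq_weight hA hl]⟩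
  rw [pathMeasure, dif_pos hex]
  obtain ⟨hprob, hcyl⟩ := hex.choose_spec
  refine HistoryKernel.eq_law_of_cyl _ fun l => ?_
  by_cases hl : l = []
  · rw [hl, PathSpace.cyl_nil, measure_univ, HistoryKernel.weight]
  · rw [hcyl l hl, ofReal_cylWeight_eq_weight hA hl]

end MarkovChain

/-! ## Expectations and values of payoff functions -/

/-- The expectation of `f` under `q`. -/
def mean (q : PMF S) (f : S → ℝ) : ℝ := ∑' t, (q t).toReal * f t

theorem mean_pure (s : S) (f : S → ℝ) : mean (PMF.pure s) f = f s := by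
  rw [mean, tsum_eq_single s fun t ht => by simp [ht]]
  simp

theorem hasSum_toReal_mul_const (q : PMF S) (c : ℝ) : HasSum (fun t => (q t).toReal * c) c := by
  have hone : HasSum (fun t => (q t).toReal) 1 := by
    simpa [← ENNReal.tsum_toReal_eq q.apply_ne_top, q.tsum_coe] using
      (ENNReal.summable_toReal q.tsum_coe_ne_top).hasSum
  simpa using hone.mul_right c

theorem summable_toReal_mul (q : PMF S) {f : S → ℝ} {C : ℝ} (hf : ∀ t, |f t| ≤ C) :
    Summable fun t => (q t).toReal * f t := by
  refine (hasSum_toReal_mul_const q C).summable.of_norm_bounded fun t => ?_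
  rw [Real.norm_eq_abs, abs_mul, ENNReal.abs_toReal]
  exact mul_le_mul_of_nonneg_left (hf t) ENNReal.toReal_nonneg

theorem mean_le_mean_add (q : PMF S) {f g : S → ℝ} {C D ε : ℝ} (hf : ∀ t, |f t| ≤ C)
    (hg : ∀ t, |g t| ≤ D) (hfg : ∀ t, f t ≤ g t + ε) : mean q f ≤ mean q g + ε := by
  refine hasSum_le (fun t => ?_) (summable_toReal_mul q hf).hasSum
    ((summable_toReal_mul q hg).hasSum.add (hasSum_toReal_mul_const q ε))
  rw [← mul_add]
  exact mul_le_mul_of_nonneg_left (hfg t) ENNReal.toReal_nonneg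

theorem abs_mean_le (q : PMF S) {f : S → ℝ} {C : ℝ} (hf : ∀ t, |f t| ≤ C) : |mean q f| ≤ C := by
  refine tsum_of_norm_bounded (f := fun t => (q t).toReal * f t)
    (hasSum_toReal_mul_const q C) fun t => ?_
  rw [Real.norm_eq_abs, abs_mul, ENNReal.abs_toReal]
  exact mul_le_mul_of_nonneg_left (hf t) ENNReal.toReal_nonneg

theorem bddAbove_range_of_abs_le {ι : Type*} {f : ι → ℝ} {C : ℝ} (hf : ∀ i, |f i| ≤ C) :
    BddAbove (Set.range f) :=
  ⟨C, Set.forall_mem_range.2 fun i => (abs_le.1 (hf i)).2⟩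

theorem bddBelow_range_of_abs_le {ι : Type*} {f : ι → ℝ} {C : ℝ} (hf : ∀ i, |f i| ≤ C) :
    BddBelow (Set.range f) :=
  ⟨-C, Set.forall_mem_range.2 fun i => (abs_le.1 (hf i)).1⟩

theorem abs_ciSup_le {ι : Type*} [Nonempty ι] {f : ι → ℝ} {C : ℝ} (hf : ∀ i, |f i| ≤ C) :
    |⨆ i, f i| ≤ C := by
  obtain ⟨i⟩ := ‹Nonempty ι›
  exact abs_le.2 ⟨le_ciSup_of_le (bddAbove_range_of_abs_le hf) i (abs_le.1 (hf i)).1,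
    ciSup_le fun i => (abs_le.1 (hf i)).2⟩

theorem abs_ciInf_le {ι : Type*} [Nonempty ι] {f : ι → ℝ} {C : ℝ} (hf : ∀ i, |f i| ≤ C) :
    |⨅ i, f i| ≤ C := by
  obtain ⟨i⟩ := ‹Nonempty ι›
  exact abs_le.2 ⟨le_ciInf fun i => (abs_le.1 (hf i)).1,
    ciInf_le_of_le (bddBelow_range_of_abs_le hf) i (abs_le.1 (hf i)).2⟩

namespace Strategy

variable {A : Arena S} {pl : Player}

instance : Nonempty (Strategy A pl) := by
  have hmove (s : S) : ∃ t, A.E s ≠ ∅ → t ∈ A.E s := by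
    by_cases hs : A.E s = ∅
    · exact ⟨s, absurd hs⟩
    · exact (Set.nonempty_iff_ne_empty.2 hs).imp fun _ ht _ => ht
  choose move hmove using hmove
  exact ⟨⟨fun _ => move, fun _ s _ => hmove s⟩⟩

theorem range_next {s : S} (l : List S) (hs : A.E s ≠ ∅) (ho : A.owner s = pl) :
    Set.range (fun ρ : Strategy A pl => ρ.next l s) = A.E s := by
  refine Set.Subset.antisymm (Set.range_subset_iff.2 fun ρ => ρ.valid l s ho hs) fun t ht => ?_
  obtain ⟨ρ⟩ : Nonempty (Strategy A pl) := inferInstance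
  refine ⟨⟨fun l => Function.update (ρ.next l) s t, fun l x hx hE => ?_⟩,
    Function.update_self s t (ρ.next l)⟩
  by_cases h : x = s
  · rw [h, Function.update_self]
    exact ht
  · rw [Function.update_of_ne h]
    exact ρ.valid l x hx hE

/-- After a first state `s`, the strategy `ρ` plays like `τ t`, where `t` is the second state. -/
def ContinuesAs (ρ : Strategy A pl) (s : S) (τ : S → Strategy A pl) : Prop :=
  ∀ h x, ρ.next (s :: h) x = (τ ((h ++ [x]).head (by simp))).next h x

/-- The strategy `ρ` in the remaining game after a first state `s`. -/
def shift (s : S) (ρ : Strategy A pl) : Strategy A pl :=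
  ⟨fun h x => ρ.next (s :: h) x, fun h x => ρ.valid (s :: h) x⟩

theorem continuesAs_shift (ρ : Strategy A pl) (s : S) : ρ.ContinuesAs s fun _ => ρ.shift s :=
  fun _ _ => rfl

/-- The strategy that makes its first move like `ρ` and plays like `τ t` afterwards, where `t` is
the second state. -/
def glue (ρ : Strategy A pl) (τ : S → Strategy A pl) : Strategy A pl where
  next
    | [], x => ρ.next [] x
    | _ :: h, x => (τ ((h ++ [x]).head (by simp))).next h x
  valid
    | [], x => ρ.valid [] x
    | _ :: h, x => (τ ((h ++ [x]).head (by simp))).valid h x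

theorem glue_continuesAs (ρ : Strategy A pl) (τ : S → Strategy A pl) (s : S) :
    (ρ.glue τ).ContinuesAs s τ :=
  fun _ _ => rfl

end Strategy

/-- A bounded measurable payoff function that gives the reward `R` to terminal states and otherwise
does not depend on the first state of a path, as for parity, Muller or bounded mean-payoff games. -/
structure IsTailPayoff (A : Arena S) (R : S → ℝ) (Φ : PathSpace S → ℝ) : Prop where
  measurable : Measurable Φ
  bounded : ∃ C, ∀ u, |Φ u| ≤ C
  of_terminal : ∀ u, A.E (u 0) = ∅ → Φ u = R (u 0)
  cons : ∀ s u, A.E s ≠ ∅ → Φ (PathSpace.cons s u) = Φ u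

/-- The expectation of the payoff `Φ` in the Markov chain `M^s_{σ₁,σ₂}`. -/
def expPayoff (A : Arena S) (Φ : PathSpace S → ℝ) (σ₁ : Strategy A Player.one)
    (σ₂ : Strategy A Player.two) (s : S) : ℝ :=
  ∫ u, Φ u ∂pathMeasure A σ₁ σ₂ s

/-- What the strategy `σ₁` guarantees to Player 1 against every strategy of Player 2. -/
def securedPayoff (A : Arena S) (Φ : PathSpace S → ℝ) (σ₁ : Strategy A Player.one) (s : S) : ℝ :=
  ⨅ σ₂, expPayoff A Φ σ₁ σ₂ s

/-- The lower value of the game with payoff `Φ`. -/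
def payoffLowerValue (A : Arena S) (Φ : PathSpace S → ℝ) (s : S) : ℝ :=
  ⨆ σ₁, securedPayoff A Φ σ₁ s

namespace IsTailPayoff

variable {A : Arena S} {R : S → ℝ} {Φ : PathSpace S → ℝ} (hΦ : IsTailPayoff A R Φ)
  (hA : A.Wellformed)

include hΦ in
theorem integrable (μ : Measure (PathSpace S)) [IsFiniteMeasure μ] : Integrable Φ μ := by
  obtain ⟨C, hC⟩ := hΦ.bounded
  exact Integrable.of_bound hΦ.measurable.aestronglyMeasurable C (ae_of_all μ hC)

include hΦ hA

theorem exists_abs_expPayoff_le : ∃ C, ∀ σ₁ σ₂ s, |expPayoff A Φ σ₁ σ₂ s| ≤ C := by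
  obtain ⟨C, hC⟩ := hΦ.bounded
  refine ⟨C, fun σ₁ σ₂ s => ?_⟩
  rw [expPayoff, pathMeasure_eq_law hA]
  simpa using norm_integral_le_of_norm_le_const (f := Φ) (C := C)
    (ae_of_all (hA.kernel σ₁ σ₂ s).law hC)

theorem exists_abs_payoffLowerValue_le : ∃ C, ∀ s, |payoffLowerValue A Φ s| ≤ C := by
  obtain ⟨C, hC⟩ := hΦ.exists_abs_expPayoff_le hA
  exact ⟨C, fun s => abs_ciSup_le fun σ₁ => abs_ciInf_le fun σ₂ => hC σ₁ σ₂ s⟩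

theorem securedPayoff_le_expPayoff (σ₁ : Strategy A Player.one) (σ₂ : Strategy A Player.two)
    (s : S) : securedPayoff A Φ σ₁ s ≤ expPayoff A Φ σ₁ σ₂ s := by
  obtain ⟨C, hC⟩ := hΦ.exists_abs_expPayoff_le hA
  exact ciInf_le (bddBelow_range_of_abs_le fun σ₂ => hC σ₁ σ₂ s) σ₂

theorem securedPayoff_le_payoffLowerValue (σ₁ : Strategy A Player.one) (s : S) :
    securedPayoff A Φ σ₁ s ≤ payoffLowerValue A Φ s := by
  obtain ⟨C, hC⟩ := hΦ.exists_abs_expPayoff_le hA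
  exact le_ciSup (bddAbove_range_of_abs_le fun σ₁ => abs_ciInf_le fun σ₂ => hC σ₁ σ₂ s) σ₁

variable {σ₁ : Strategy A Player.one} {σ₂ : Strategy A Player.two} {s : S}

theorem expPayoff_eq_integral_cons : expPayoff A Φ σ₁ σ₂ s =
    ∫ u, Φ (PathSpace.cons s u) ∂((hA.kernel σ₁ σ₂ s).after s).law := by
  rw [expPayoff, pathMeasure_eq_law hA, HistoryKernel.integral_law _ hΦ.measurable
    (hΦ.integrable _)]
  exact mean_pure s fun t => ∫ u, Φ (PathSpace.cons t u) ∂((hA.kernel σ₁ σ₂ s).after t).law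

theorem expPayoff_of_terminal (hs : A.E s = ∅) : expPayoff A Φ σ₁ σ₂ s = R s := by
  have hR (u : PathSpace S) : Φ (PathSpace.cons s u) = R s := hΦ.of_terminal _ hs
  simp [hΦ.expPayoff_eq_integral_cons hA, hR]

theorem expPayoff_eq_mean (hs : A.E s ≠ ∅) {τ₁ : S → Strategy A Player.one}
    {τ₂ : S → Strategy A Player.two} (h₁ : σ₁.ContinuesAs s τ₁) (h₂ : σ₂.ContinuesAs s τ₂) :
    expPayoff A Φ σ₁ σ₂ s =
      mean (hA.nextLaw σ₁ σ₂ [] s) fun t => expPayoff A Φ (τ₁ t) (τ₂ t) t := by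
  have hkernel (t : S) : ((hA.kernel σ₁ σ₂ s).after s).after t =
      (hA.kernel (τ₁ t) (τ₂ t) t).after t := by
    funext h
    have hhead : ((t :: h).dropLast ++ [(t :: h).getLast (List.cons_ne_nil t h)]).head
        (by simp) = t := by
      simp [List.dropLast_append_getLast]
    refine hA.nextLaw_congr ((h₁ _ _).trans ?_) ((h₂ _ _).trans ?_) <;>
      simp only [hhead, List.getLast_cons_cons]
  rw [hΦ.expPayoff_eq_integral_cons hA]
  simp only [hΦ.cons s _ hs]
  rw [HistoryKernel.integral_law _ hΦ.measurable (hΦ.integrable _)]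
  refine tsum_congr fun t => ?_
  rw [hkernel, ← hΦ.expPayoff_eq_integral_cons hA]
  rfl

theorem payoffLowerValue_le_iSup_iInf_mean (hs : A.E s ≠ ∅) : payoffLowerValue A Φ s ≤
    ⨆ σ₁, ⨅ σ₂, mean (hA.nextLaw σ₁ σ₂ [] s) (payoffLowerValue A Φ) := by
  obtain ⟨C, hC⟩ := hΦ.exists_abs_expPayoff_le hA
  obtain ⟨D, hD⟩ := hΦ.exists_abs_payoffLowerValue_le hA
  refine ciSup_le fun σ₁ => le_ciSup_of_le (bddAbove_range_of_abs_le fun σ₁ =>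
    abs_ciInf_le fun σ₂ => abs_mean_le (hA.nextLaw σ₁ σ₂ [] s) hD) σ₁ ?_
  refine le_ciInf fun σ₂ => le_of_forall_pos_le_add fun ε hε => ?_
  have hnear (t : S) : ∃ τ₂, expPayoff A Φ (σ₁.shift s) τ₂ t <
      securedPayoff A Φ (σ₁.shift s) t + ε :=
    exists_lt_of_ciInf_lt (lt_add_of_pos_right _ hε)
  choose τ₂ hτ₂ using hnear
  calc securedPayoff A Φ σ₁ s
      ≤ expPayoff A Φ σ₁ (σ₂.glue τ₂) s := hΦ.securedPayoff_le_expPayoff hA _ _ _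
    _ = mean (hA.nextLaw σ₁ σ₂ [] s) fun t => expPayoff A Φ (σ₁.shift s) (τ₂ t) t :=
        hΦ.expPayoff_eq_mean hA hs (σ₁.continuesAs_shift s) (σ₂.glue_continuesAs τ₂ s)
    _ ≤ mean (hA.nextLaw σ₁ σ₂ [] s) (payoffLowerValue A Φ) + ε :=
        mean_le_mean_add _ (fun _ => hC _ _ _) hD fun t => (hτ₂ t).le.trans
          (add_le_add_left (hΦ.securedPayoff_le_payoffLowerValue hA _ _) ε)

theorem iSup_iInf_mean_le_payoffLowerValue (hs : A.E s ≠ ∅) :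
    ⨆ σ₁, ⨅ σ₂, mean (hA.nextLaw σ₁ σ₂ [] s) (payoffLowerValue A Φ) ≤
      payoffLowerValue A Φ s := by
  obtain ⟨C, hC⟩ := hΦ.exists_abs_expPayoff_le hA
  obtain ⟨D, hD⟩ := hΦ.exists_abs_payoffLowerValue_le hA
  refine ciSup_le fun σ₁ => le_of_forall_pos_le_add fun ε hε => ?_
  have hnear (t : S) : ∃ τ₁, payoffLowerValue A Φ t - ε < securedPayoff A Φ τ₁ t :=
    exists_lt_of_lt_ciSup (sub_lt_self _ hε)
  choose τ₁ hτ₁ using hnear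
  rw [← sub_le_iff_le_add]
  refine le_trans (le_ciInf fun σ₂ => ?_)
    (hΦ.securedPayoff_le_payoffLowerValue hA (σ₁.glue τ₁) s)
  rw [sub_le_iff_le_add]
  calc ⨅ σ₂, mean (hA.nextLaw σ₁ σ₂ [] s) (payoffLowerValue A Φ)
      ≤ mean (hA.nextLaw σ₁ σ₂ [] s) (payoffLowerValue A Φ) :=
        ciInf_le (bddBelow_range_of_abs_le fun σ₂ => abs_mean_le _ hD) σ₂
    _ ≤ mean (hA.nextLaw σ₁ σ₂ [] s) (fun t => expPayoff A Φ (τ₁ t) (σ₂.shift s) t) + ε :=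
        mean_le_mean_add _ hD (fun _ => hC _ _ _) fun t => (sub_lt_iff_lt_add.1 (hτ₁ t)).le.trans
          (add_le_add_left (hΦ.securedPayoff_le_expPayoff hA _ _ _) ε)
    _ = expPayoff A Φ (σ₁.glue τ₁) σ₂ s + ε := by
        rw [hΦ.expPayoff_eq_mean hA hs (σ₁.glue_continuesAs τ₁ s) (σ₂.continuesAs_shift s)]
        rfl

theorem payoffLowerValue_eq_iSup_iInf_mean (hs : A.E s ≠ ∅) : payoffLowerValue A Φ s =
    ⨆ σ₁, ⨅ σ₂, mean (hA.nextLaw σ₁ σ₂ [] s) (payoffLowerValue A Φ) :=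
  (hΦ.payoffLowerValue_le_iSup_iInf_mean hA hs).antisymm
    (hΦ.iSup_iInf_mean_le_payoffLowerValue hA hs)

end IsTailPayoff

theorem mean_natureLaw {A : Arena S} (hA : A.Wellformed) {s : S} (hs : A.owner s = Player.nature)
    (f : S → ℝ) : mean (hA.natureLaw s hs) f = ∑' t : A.E s, A.prob s t * f t := by
  obtain ⟨hnonneg, -, hE⟩ := hA s hs
  rw [tsum_subtype_eq_of_support_subset (f := fun t => A.prob s t * f t)
    (hE ▸ Function.support_mul_subset_left _ _)]
  refine tsum_congr fun t => ?_
  rw [hA.natureLaw_apply, ENNReal.toReal_ofReal (hnonneg t)]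

theorem bellman_eq_iSup_iInf_mean {A : Arena S} (hA : A.Wellformed) (R f : S → ℝ) {s : S}
    (hs : A.E s ≠ ∅) : bellman A R f s = ⨆ σ₁, ⨅ σ₂, mean (hA.nextLaw σ₁ σ₂ [] s) f := by
  rw [bellman, if_neg hs]
  cases ho : A.owner s with
  | one =>
    simp only [hA.nextLaw_of_owner_one hs ho, mean_pure, ciInf_const]
    rw [← Strategy.range_next [] hs ho, ← Set.range_comp]
    rfl
  | two =>
    simp only [hA.nextLaw_of_owner_two hs ho, mean_pure, ciSup_const]
    rw [← Strategy.range_next [] hs ho, ← Set.range_comp]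
    rfl
  | nature => simp only [hA.nextLaw_of_owner_nature ho, ciInf_const, ciSup_const, mean_natureLaw]

/-! ## Parity payoffs -/

/-- The priorities that occur infinitely often along a path. -/
def recurrentPriorities (pri : S → ℕ) (u : PathSpace S) : Set ℕ :=
  {n | {i | pri (u i) = n}.Infinite}

theorem recurrentPriorities_subset_range (pri : S → ℕ) (u : PathSpace S) :
    recurrentPriorities pri u ⊆ Set.range pri := fun _ hn => by
  obtain ⟨i, hi⟩ := Set.Infinite.nonempty hn
  exact ⟨u i, hi⟩

theorem recurrentPriorities_cons (pri : S → ℕ) (s : S) (u : PathSpace S) :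
    recurrentPriorities pri (PathSpace.cons s u) = recurrentPriorities pri u := by
  ext n
  simp only [recurrentPriorities, Set.mem_ofPred_eq, ← Nat.frequently_atTop_iff_infinite]
  conv_lhs => rw [← Filter.map_add_atTop_eq_nat 1, Filter.frequently_map]
  rfl

theorem measurable_recurrentPriorities (pri : S → ℕ) : Measurable (recurrentPriorities pri) := by
  refine measurable_set_iff.2 fun n => ?_
  have hoccurrences : Measurable fun u : PathSpace S => {i | pri (u i) = n} :=
    measurable_set_iff.2 fun i => measurableSet_setOfPred.1 <|
      PathSpace.measurableSet_setOf_apply_mem i {x | pri x = n}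
  exact measurableSet_setOfPred.1 (hoccurrences .setOfPred_infinite)

theorem measurableSet_setOf_even_sSup_recurrentPriorities {pri : S → ℕ}
    (hpri : (Set.range pri).Finite) :
    MeasurableSet {u | Even (sSup (recurrentPriorities pri u))} := by
  have hpreimage : {u | Even (sSup (recurrentPriorities pri u))} =
      recurrentPriorities pri ⁻¹' {T | T ⊆ Set.range pri ∧ Even (sSup T)} := by
    ext u
    exact (and_iff_right (recurrentPriorities_subset_range pri u)).symm
  rw [hpreimage]
  exact measurable_recurrentPriorities pri
    (hpri.finite_subsets.subset fun T hT => hT.1).measurableSet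

theorem measurable_payoff (A : Arena S) {pri : S → ℕ} (hpri : (Set.range pri).Finite)
    (R : S → ℝ) : Measurable (payoff A pri R) := by
  have hterminal (i : ℕ) : MeasurableSet {u : PathSpace S | A.E (u i) = ∅} :=
    PathSpace.measurableSet_setOf_apply_mem i {x | A.E x = ∅}
  have hexists : MeasurableSet {u : PathSpace S | ∃ i, A.E (u i) = ∅} := by
    simpa only [Set.ofPred_exists] using MeasurableSet.iUnion hterminal
  have hreward : Measurable fun u : {u : PathSpace S | ∃ i, A.E (u i) = ∅} =>
      R (u.1 (Nat.find u.2)) :=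
    Measurable.find (f := fun n (u : {u : PathSpace S | ∃ i, A.E (u i) = ∅}) => R (u.1 n))
      (fun n B _ => measurable_subtype_coe
        (PathSpace.measurableSet_setOf_apply_mem n (R ⁻¹' B)))
      (fun n => measurable_subtype_coe (hterminal n)) fun u => u.2
  have hparity : Measurable fun u : PathSpace S =>
      if Even (sSup (recurrentPriorities pri u)) then (1 : ℝ) else 0 :=
    Measurable.ite (measurableSet_setOf_even_sSup_recurrentPriorities hpri)
      measurable_const measurable_const
  exact Measurable.dite hreward (hparity.comp measurable_subtype_coe) hexists

theorem payoff_cons (A : Arena S) (pri : S → ℕ) (R : S → ℝ) {s : S} (hs : A.E s ≠ ∅)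
    (u : PathSpace S) : payoff A pri R (PathSpace.cons s u) = payoff A pri R u := by
  have hexists : (∃ i, A.E (PathSpace.cons s u i) = ∅) ↔ ∃ i, A.E (u i) = ∅ :=
    ⟨fun
      | ⟨0, hi⟩ => absurd hi hs
      | ⟨i + 1, hi⟩ => ⟨i, hi⟩, fun ⟨i, hi⟩ => ⟨i + 1, hi⟩⟩
  unfold payoff
  by_cases h : ∃ i, A.E (u i) = ∅
  · rw [dif_pos h, dif_pos (hexists.2 h), Nat.find_comp_succ (hexists.2 h) h hs]
    rfl
  · rw [dif_neg h, dif_neg (mt hexists.1 h)]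
    exact congrArg (fun T => if Even (sSup T) then 1 else 0) (recurrentPriorities_cons pri s u)

theorem isTailPayoff_payoff (A : Arena S) {pri : S → ℕ} (hpri : (Set.range pri).Finite)
    {R : S → ℝ} (hR : ∀ s, A.E s = ∅ → R s ∈ Set.Icc (0 : ℝ) 1) :
    IsTailPayoff A R (payoff A pri R) where
  measurable := measurable_payoff A hpri R
  bounded := by
    refine ⟨1, fun u => ?_⟩
    unfold payoff
    split_ifs with hterminal
    · obtain ⟨hnonneg, hle⟩ := hR _ (Nat.find_spec hterminal)
      rwa [abs_of_nonneg hnonneg]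
    · simp
    · simp
  of_terminal u hu := by
    have hterminal : ∃ i, A.E (u i) = ∅ := ⟨0, hu⟩
    rw [payoff, dif_pos hterminal, (Nat.find_eq_zero hterminal).2 hu]
  cons s u hs := payoff_cons A pri R hs u

theorem lowerValue_fixedPoint_bellman_general {A : Arena S} (hA : A.Wellformed) {R : S → ℝ}
    {Φ : PathSpace S → ℝ} (hΦ : IsTailPayoff A R Φ) :
    bellman A R (payoffLowerValue A Φ) = payoffLowerValue A Φ := by
  funext s
  by_cases hs : A.E s = ∅
  · simp only [bellman, if_pos hs, payoffLowerValue, securedPayoff,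
      hΦ.expPayoff_of_terminal hA hs, ciInf_const, ciSup_const]
  · rw [bellman_eq_iSup_iInf_mean hA R _ hs, hΦ.payoffLowerValue_eq_iSup_iInf_mean hA hs]

/-- **Bellman fixed-point property of the lower value** of a 2½-player parity game. -/
theorem lowerValue_fixedPoint_bellman {S : Type} (A : Arena S) (hA : A.Wellformed)
    (pri : S → ℕ) (hpri : (Set.range pri).Finite)
    (R : S → ℝ) (hR : ∀ s, A.E s = ∅ → R s ∈ Set.Icc (0:ℝ) 1) :
    bellman A R (lowerValue A pri R) = lowerValue A pri R := by
  exact lowerValue_fixedPoint_bellman_general hA (isTailPayoff_payoff A hpri hR)
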